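/- Let F ⊆ X^ω be a finite set of ω-words. Then F has the Automatic Baire property if and only if F does not contain a disjunctive ω-word. -/

import Mathlib

open Set MeasureTheory Computability

namespace AutoBaire

/-- The Cantor topology on the space of ω-words over `X`:
the product of the discrete topology on `X`. -/
def cantorTop (X : Type) : TopologicalSpace (ℕ → X) :=
  @Pi.topologicalSpace ℕ (fun _ => X) (fun _ => ⊥)

/-- The Borel σ-algebra of the Cantor space. -/
def cantorBorel (X : Type) : MeasurableSpace (ℕ → X) :=
  @borel (ℕ → X) (cantorTop X)

variable {X : Type}

/-- Concatenation `w·ξ` of a finite word with an ω-word. -/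
def wcat (w : List X) (ξ : ℕ → X) : ℕ → X :=
  Stream'.appendStream' w ξ

/-- The ball (cylinder) `w·X^ω`. -/
def cyl (w : List X) : Set (ℕ → X) := {ξ | ∃ η : ℕ → X, ξ = wcat w η}

/-- The ω-language `W·A` for a language `W` and an ω-language `A`. -/
def catOmega (W : Language X) (A : Set (ℕ → X)) : Set (ℕ → X) :=
  {ξ | ∃ w ∈ W, ∃ η ∈ A, ξ = wcat w η}

/-- `V^ω`: the set of ω-words that are infinite concatenations
`v₁·v₂·⋯` of non-empty words `vᵢ ∈ V`. -/
def omegaPow (V : Language X) : Set (ℕ → X) :=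
  {ξ | ∃ f : ℕ → List X, (∀ i, f i ∈ V ∧ f i ≠ []) ∧
    ∀ k, ξ ∈ cyl (((List.range k).map f).flatten)}

/-- Regular languages: those obtained from finite languages via the operations
union, concatenation and star. -/
inductive IsRegLang : Language X → Prop
  | finite (W : Language X) : (W : Set (List X)).Finite → IsRegLang W
  | union (W V : Language X) : IsRegLang W → IsRegLang V → IsRegLang (W + V)
  | concat (W V : Language X) : IsRegLang W → IsRegLang V → IsRegLang (W * V)
  | star (W : Language X) : IsRegLang W → IsRegLang (W∗)

/-- Regular ω-languages: finite unions `⋃ᵢ Wᵢ·Vᵢ^ω` with `Wᵢ, Vᵢ` regular. -/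
def IsRegOmega (F : Set (ℕ → X)) : Prop :=
  ∃ (n : ℕ) (W V : Fin n → Language X),
    (∀ i, IsRegLang (W i) ∧ IsRegLang (V i)) ∧
    F = ⋃ i, catOmega (W i) (omegaPow (V i))

/-- `X*·w·X^ω`: the set of ω-words containing `w` as an infix. -/
def infixOcc (w : List X) : Set (ℕ → X) :=
  {ξ | ∃ u : List X, ξ ∈ cyl (u ++ w)}

/-- An ω-word is disjunctive if every finite word occurs in it as an infix. -/
def Disjunctive (ξ : ℕ → X) : Prop := ∀ w : List X, ξ ∈ infixOcc w

/-- Ultimately periodic ω-words: `ξ = w·v·v·v·⋯` with `v ≠ e`. -/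
def UltPeriodic (ξ : ℕ → X) : Prop :=
  ∃ (w v : List X) (h : v ≠ []), ξ = wcat w (Stream'.cycle v h)

/-- The Automatic Baire property: `F Δ E ⊆ F'` for some regular open
ω-language `E` and some regular ω-language `F'` of first Baire category. -/
def HasABP (F : Set (ℕ → X)) : Prop :=
  ∃ E F' : Set (ℕ → X),
    IsRegOmega E ∧ @IsOpen _ (cantorTop X) E ∧
    IsRegOmega F' ∧ @IsMeagre _ (cantorTop X) F' ∧
    symmDiff F E ⊆ F'

/-- The measure is finite and non-null: `0 < μ(X^ω) < ∞`. -/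
def FiniteNonNull (μ : @MeasureTheory.Measure (ℕ → X) (cantorBorel X)) : Prop :=
  0 < μ Set.univ ∧ μ Set.univ < ⊤

/-- `supp(μ) = X^ω`: every non-empty open set has positive measure. -/
def FullSupport (μ : @MeasureTheory.Measure (ℕ → X) (cantorBorel X)) : Prop :=
  ∀ U : Set (ℕ → X), @IsOpen _ (cantorTop X) U → U.Nonempty → 0 < μ U

/-- The balance condition: there is `c > 0` such that for all `w ∈ X*`, `x ∈ X`
either `μ(wx·X^ω) = 0` or `c·μ(w·X^ω) ≤ μ(wx·X^ω)`. -/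
def Balanced (μ : @MeasureTheory.Measure (ℕ → X) (cantorBorel X)) : Prop :=
  ∃ c : ENNReal, 0 < c ∧ ∀ (w : List X) (x : X),
    μ (cyl (w ++ [x])) = 0 ∨ c * μ (cyl w) ≤ μ (cyl (w ++ [x]))

/-!
The heart of the matter is that a meagre regular ω-language `A` lies in `eventuallyAvoiding w` for a
single word `w`.

It suffices to treat `V^ω` with `V` regular. Suppose some word `u` can be continued, after any
further word, to a word of `V*`. Then generically every occurrence of `u` in an ω-word is the start
of a non-empty word of `V*` that leads to another occurrence of `u`, so a generic ω-word beginning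
with `u` lies in `V^ω`, which is therefore not meagre. Hence, if `V^ω` is meagre, every word has an
extension that is not a prefix of any word of `V*`. As `V*` has finitely many left quotients, these
extensions can be concatenated into one word `y` after which all quotients of `V*` are empty; such a
`y` occurs in no member of `V^ω`.

Conversely, cutting the ω-words without `w` into blocks of length `|w|` puts `eventuallyAvoiding w`
inside a meagre regular ω-language. So a meagre set has the Automatic Baire property exactly when it
is contained in some `eventuallyAvoiding w`, the open part `E` being empty by Baire's theorem. The
sets `eventuallyAvoiding w` are directed and their union consists of the non-disjunctive ω-words,
which settles the case of finite sets.
-/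

/-- The tail of an ω-word after its first `n` letters. -/
def shift (n : ℕ) (ξ : ℕ → X) : ℕ → X := fun i => ξ (n + i)

/-- The word formed by the first `n` letters of an ω-word. -/
def prefixWord (n : ℕ) (ξ : ℕ → X) : List X := Stream'.take n ξ

/-- The ω-words in which `w` occurs only finitely often, written as `X*·(X^ω \ X*·w·X^ω)`. -/
def eventuallyAvoiding (w : List X) : Set (ℕ → X) := catOmega ⊤ (infixOcc w)ᶜ

/-- The words of length `|w|` other than `w`. Cutting an ω-word that avoids `w` into blocks of
length `|w|` yields words of this finite language. -/
def otherBlocks (w : List X) : Language X := {v | v.length = w.length ∧ v ≠ w}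

theorem wcat_append (v w : List X) (ξ : ℕ → X) : wcat (v ++ w) ξ = wcat v (wcat w ξ) :=
  Stream'.append_append_stream v w ξ

theorem wcat_apply_of_lt {w : List X} {i : ℕ} (hi : i < w.length) (ξ : ℕ → X) :
    wcat w ξ i = w[i] :=
  Stream'.get_append_left i w ξ hi

theorem wcat_apply_length_add (w : List X) (ξ : ℕ → X) (i : ℕ) : wcat w ξ (w.length + i) = ξ i :=
  Stream'.get_append_right i w ξ

theorem shift_zero (ξ : ℕ → X) : shift 0 ξ = ξ := funext fun i => congrArg ξ (zero_add i)

theorem length_prefixWord (n : ℕ) (ξ : ℕ → X) : (prefixWord n ξ).length = n :=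
  Stream'.length_take n ξ

theorem take_prefixWord (m n : ℕ) (ξ : ℕ → X) :
    (prefixWord n ξ).take m = prefixWord (min n m) ξ :=
  Stream'.take_take

theorem wcat_prefixWord_shift (n : ℕ) (ξ : ℕ → X) : wcat (prefixWord n ξ) (shift n ξ) = ξ := by
  have drop_eq_shift : Stream'.drop n ξ = shift n ξ := funext fun i => congrArg ξ (add_comm i n)
  exact drop_eq_shift ▸ Stream'.append_take_drop n ξ

theorem getElem_prefixWord {n i : ℕ} {ξ : ℕ → X} (hi : i < (prefixWord n ξ).length) :
    (prefixWord n ξ)[i] = ξ i := by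
  rw [← wcat_apply_of_lt hi (shift n ξ), wcat_prefixWord_shift]

theorem prefixWord_eq_iff {n : ℕ} {ξ η : ℕ → X} :
    prefixWord n ξ = prefixWord n η ↔ ∀ i < n, ξ i = η i := by
  simp +contextual only [List.ext_getElem_iff, length_prefixWord, getElem_prefixWord, true_and,
    forall_const]

theorem shift_wcat (w : List X) (ξ : ℕ → X) : shift w.length (wcat w ξ) = ξ :=
  funext (wcat_apply_length_add w ξ)

theorem shift_shift (m n : ℕ) (ξ : ℕ → X) : shift m (shift n ξ) = shift (n + m) ξ :=
  funext fun i => congrArg ξ (add_assoc n m i).symm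

theorem wcat_mem_cyl (w : List X) (ξ : ℕ → X) : wcat w ξ ∈ cyl w := ⟨ξ, rfl⟩

theorem mem_cyl_iff_prefixWord_eq {w : List X} {ξ : ℕ → X} :
    ξ ∈ cyl w ↔ prefixWord w.length ξ = w := by
  constructor
  · rintro ⟨η, rfl⟩
    exact Stream'.append_left_injective _ _ _ _ (wcat_prefixWord_shift w.length (wcat w η))
      (length_prefixWord _ _)
  · intro h
    exact ⟨shift w.length ξ, by simpa only [h] using (wcat_prefixWord_shift w.length ξ).symm⟩

theorem mem_cyl_prefixWord (n : ℕ) (ξ : ℕ → X) : ξ ∈ cyl (prefixWord n ξ) :=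
  ⟨shift n ξ, (wcat_prefixWord_shift n ξ).symm⟩

theorem mem_cyl_append {v w : List X} {ξ : ℕ → X} :
    ξ ∈ cyl (v ++ w) ↔ ξ ∈ cyl v ∧ shift v.length ξ ∈ cyl w := by
  constructor
  · rintro ⟨η, rfl⟩
    rw [wcat_append, shift_wcat]
    exact ⟨wcat_mem_cyl _ _, wcat_mem_cyl _ _⟩
  · rintro ⟨⟨ζ, rfl⟩, η, hη⟩
    rw [shift_wcat] at hη
    exact ⟨η, by rw [hη, wcat_append]⟩

theorem image_wcat_cyl (v w : List X) : wcat v '' cyl w = cyl (v ++ w) := by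
  ext ξ
  constructor
  · rintro ⟨_, ⟨η, rfl⟩, rfl⟩
    exact ⟨η, (wcat_append v w η).symm⟩
  · rintro ⟨η, rfl⟩
    exact ⟨wcat w η, wcat_mem_cyl w η, (wcat_append v w η).symm⟩

theorem cyl_subset_of_prefix {v w : List X} (h : v <+: w) : cyl w ⊆ cyl v := by
  obtain ⟨u, rfl⟩ := h
  exact fun _ hξ => (mem_cyl_append.mp hξ).1

theorem prefix_of_mem_cyl {v w : List X} {ξ : ℕ → X} (hv : ξ ∈ cyl v) (hw : ξ ∈ cyl w)
    (hle : v.length ≤ w.length) : v <+: w := by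
  rw [mem_cyl_iff_prefixWord_eq] at hv hw
  rw [List.prefix_iff_eq_take]
  conv_rhs => rw [← hw, take_prefixWord, min_eq_right hle, hv]

theorem cyl_prefixWord (n : ℕ) (ξ : ℕ → X) : cyl (prefixWord n ξ) = PiNat.cylinder ξ n := by
  ext η
  rw [PiNat.mem_cylinder_iff, mem_cyl_iff_prefixWord_eq, length_prefixWord, prefixWord_eq_iff]

theorem mem_infixOcc_iff {w : List X} {ξ : ℕ → X} :
    ξ ∈ infixOcc w ↔ ∃ n, shift n ξ ∈ cyl w := by
  constructor
  · rintro ⟨u, hu⟩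
    exact ⟨u.length, (mem_cyl_append.mp hu).2⟩
  · rintro ⟨n, hn⟩
    exact ⟨prefixWord n ξ,
      mem_cyl_append.mpr ⟨mem_cyl_prefixWord n ξ, by rwa [length_prefixWord]⟩⟩

theorem infixOcc_subset_of_infix {v w : List X} (h : v <:+: w) : infixOcc w ⊆ infixOcc v := by
  obtain ⟨s, t, rfl⟩ := h
  rintro ξ ⟨u, hu⟩
  exact ⟨u ++ s, cyl_subset_of_prefix ⟨t, by simp only [List.append_assoc]⟩ hu⟩

theorem catOmega_mono {V W : Language X} {A B : Set (ℕ → X)} (hVW : V ≤ W) (hAB : A ⊆ B) :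
    catOmega V A ⊆ catOmega W B := by
  rintro _ ⟨v, hv, η, hη, rfl⟩
  exact ⟨v, hVW hv, η, hAB hη, rfl⟩

theorem catOmega_top (A : Set (ℕ → X)) : catOmega ⊤ A = ⋃ n, shift n ⁻¹' A := by
  ext ξ
  rw [mem_iUnion]
  constructor
  · rintro ⟨w, -, η, hη, rfl⟩
    exact ⟨w.length, by rwa [mem_preimage, shift_wcat]⟩
  · rintro ⟨n, hn⟩
    exact ⟨prefixWord n ξ, mem_univ _, shift n ξ, hn, (wcat_prefixWord_shift n ξ).symm⟩

theorem mem_eventuallyAvoiding_iff {w : List X} {ξ : ℕ → X} :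
    ξ ∈ eventuallyAvoiding w ↔ ∃ n, shift n ξ ∉ infixOcc w := by
  simp only [eventuallyAvoiding, catOmega_top, mem_iUnion, mem_preimage, mem_compl_iff]

theorem directed_eventuallyAvoiding : Directed (· ⊆ ·) (eventuallyAvoiding (X := X)) := by
  have mono {v w : List X} (h : v <:+: w) : eventuallyAvoiding v ⊆ eventuallyAvoiding w :=
    catOmega_mono le_rfl (compl_subset_compl.mpr (infixOcc_subset_of_infix h))
  exact fun v w => ⟨v ++ w, mono (List.prefix_append v w).isInfix,
    mono (List.suffix_append v w).isInfix⟩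

theorem disjunctive_shift {ξ : ℕ → X} (h : Disjunctive ξ) (n : ℕ) :
    Disjunctive (shift n ξ) := by
  intro w
  obtain ⟨m, hm⟩ := mem_infixOcc_iff.mp (h (prefixWord n ξ ++ w))
  refine mem_infixOcc_iff.mpr ⟨m, ?_⟩
  simpa only [length_prefixWord, shift_shift, add_comm] using (mem_cyl_append.mp hm).2

theorem exists_mem_eventuallyAvoiding_iff {ξ : ℕ → X} :
    (∃ w, ξ ∈ eventuallyAvoiding w) ↔ ¬ Disjunctive ξ := by
  simp only [mem_eventuallyAvoiding_iff]
  constructor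
  · rintro ⟨w, n, hw⟩ h
    exact hw (disjunctive_shift h n w)
  · intro h
    obtain ⟨w, hw⟩ := not_forall.mp h
    exact ⟨w, 0, by rwa [shift_zero]⟩

theorem exists_subset_eventuallyAvoiding_iff {F : Set (ℕ → X)} (hF : F.Finite) :
    (∃ w, F ⊆ eventuallyAvoiding w) ↔ ∀ ξ ∈ F, ¬ Disjunctive ξ := by
  simp only [← exists_mem_eventuallyAvoiding_iff]
  constructor
  · rintro ⟨w, hw⟩ ξ hξ
    exact ⟨w, hw hξ⟩
  · intro h
    choose! w hw using h
    have := hF.to_subtype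
    obtain ⟨v, hv⟩ := directed_eventuallyAvoiding.finite_le fun ξ : F => w ξ
    exact ⟨v, fun ξ hξ => hv ⟨ξ, hξ⟩ (hw ξ hξ)⟩

-- `omegaPow V` is the greatest solution of `P = (V \ {e})·P`.
theorem subset_omegaPow_of_subset_catOmega {V : Language X} {P : Set (ℕ → X)}
    (hP : P ⊆ catOmega (V - 1) P) :
    P ⊆ omegaPow V := by
  intro ξ hξ
  have unfold_once : ∀ ξ ∈ P, ∃ v ∈ V - 1, ∃ η ∈ P, ξ = wcat v η := hP
  choose! v hv next hnext hcat using unfold_once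
  have iterate_mem (k : ℕ) : next^[k] ξ ∈ P := MapsTo.iterate (fun _ => hnext _) k hξ
  refine ⟨fun k => v (next^[k] ξ), fun k => hv _ (iterate_mem k), fun k => ⟨next^[k] ξ, ?_⟩⟩
  induction k with
  | zero => rfl
  | succ k ih =>
    simp only [List.range_succ, List.map_append, List.map_cons, List.map_nil, List.flatten_append,
      List.flatten_cons, List.flatten_nil, List.append_nil, Function.iterate_succ_apply',
      wcat_append, ← hcat _ (iterate_mem k)]
    exact ih

theorem omegaPow_subset_catOmega (V : Language X) : omegaPow V ⊆ catOmega (V - 1) (omegaPow V) := by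
  rintro ξ ⟨f, hf, hξ⟩
  have mem_cyl_head_append (k : ℕ) :
      ξ ∈ cyl (f 0 ++ ((List.range k).map fun i => f (i + 1)).flatten) := by
    have h := hξ (k + 1)
    rwa [List.range_succ_eq_map, List.map_cons, List.flatten_cons, List.map_map] at h
  obtain ⟨η, rfl⟩ := (mem_cyl_append.mp (mem_cyl_head_append 0)).1
  refine ⟨f 0, hf 0, η, ⟨fun i => f (i + 1), fun i => hf (i + 1), fun k => ?_⟩, rfl⟩
  simpa only [shift_wcat] using (mem_cyl_append.mp (mem_cyl_head_append k)).2

theorem subset_omegaPow_of_subset_catOmega_kstar {V : Language X} {P : Set (ℕ → X)}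
    (hP : P ⊆ catOmega (V∗ - 1) P) : P ⊆ omegaPow V := by
  have peel_block : catOmega (V∗ - 1) P ⊆ catOmega (V - 1) (catOmega V∗ P) := by
    rintro _ ⟨w, ⟨hw, hne⟩, η, hη, rfl⟩
    obtain ⟨_ | ⟨v, S⟩, rfl, hS⟩ := Language.mem_kstar_iff_exists_nonempty.mp hw
    · exact absurd rfl hne
    · refine ⟨v, hS v List.mem_cons_self, wcat S.flatten η, ⟨S.flatten, ?_, η, hη, rfl⟩, ?_⟩
      · exact Language.join_mem_kstar fun y hy => (hS y (List.mem_cons_of_mem v hy)).1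
      · rw [List.flatten_cons, wcat_append]
  have kstar_subset : catOmega V∗ P ⊆ catOmega (V - 1) (catOmega V∗ P) := by
    rintro _ ⟨w, hw, η, hη, rfl⟩
    by_cases hne : w = []
    · subst hne
      exact peel_block (hP hη)
    · exact peel_block ⟨w, ⟨hw, hne⟩, η, hη, rfl⟩
  exact fun ξ hξ =>
    subset_omegaPow_of_subset_catOmega kstar_subset
      ⟨[], Language.nil_mem_kstar V, ξ, hξ, rfl⟩

theorem exists_mem_kstar_mem_cyl_of_mem_omegaPow {V : Language X} {ξ : ℕ → X}
    (hξ : ξ ∈ omegaPow V) (n : ℕ) : ∃ v ∈ V∗, n ≤ v.length ∧ ξ ∈ cyl v := by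
  induction n generalizing ξ with
  | zero => exact ⟨[], Language.nil_mem_kstar V, le_rfl, ξ, rfl⟩
  | succ n ih =>
    obtain ⟨v, ⟨hv, hne⟩, η, hη, rfl⟩ := omegaPow_subset_catOmega V hξ
    obtain ⟨w, hw, hn, hηw⟩ := ih hη
    refine ⟨v ++ w, ?_, ?_, mem_cyl_append.mpr ⟨wcat_mem_cyl v η, by rwa [shift_wcat]⟩⟩
    · exact mul_kstar_le_kstar (a := V) (Language.append_mem_mul hv hw)
    · have := List.length_pos_iff.mpr hne
      rw [List.length_append]
      omega

theorem compl_infixOcc_subset_omegaPow_otherBlocks (w : List X) :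
    (infixOcc w)ᶜ ⊆ omegaPow (otherBlocks w) := by
  refine subset_omegaPow_of_subset_catOmega fun ξ hξ => ?_
  have not_mem_cyl (n : ℕ) : shift n ξ ∉ cyl w := fun h => hξ (mem_infixOcc_iff.mpr ⟨n, h⟩)
  have prefix_ne : prefixWord w.length ξ ≠ w := fun h => not_mem_cyl 0 <| by
    simpa only [shift_zero] using mem_cyl_iff_prefixWord_eq.mpr h
  refine ⟨prefixWord w.length ξ, ⟨⟨length_prefixWord _ _, prefix_ne⟩, fun hnil => ?_⟩,
    shift w.length ξ, fun h => ?_, (wcat_prefixWord_shift _ ξ).symm⟩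
  · have : w = [] := by
      rw [← List.length_eq_zero_iff, ← length_prefixWord w.length ξ, hnil, List.length_nil]
    exact prefix_ne (this ▸ rfl)
  · obtain ⟨n, hn⟩ := mem_infixOcc_iff.mp h
    exact not_mem_cyl _ (shift_shift n _ ξ ▸ hn)

theorem eventuallyAvoiding_subset_catOmega (w : List X) :
    eventuallyAvoiding w ⊆ catOmega ⊤ (omegaPow (otherBlocks w)) :=
  catOmega_mono le_rfl (compl_infixOcc_subset_omegaPow_otherBlocks w)

theorem disjoint_omegaPow_otherBlocks (w : List X) (k : ℕ) :
    Disjoint (omegaPow (otherBlocks w)) (shift (k * w.length) ⁻¹' cyl w) := by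
  rw [disjoint_left]
  intro ξ hξ
  induction k generalizing ξ with
  | zero =>
    obtain ⟨v, ⟨⟨hlen, hne⟩, -⟩, η, -, rfl⟩ := omegaPow_subset_catOmega _ hξ
    intro h
    have : wcat v η ∈ cyl w := by rwa [mem_preimage, zero_mul, shift_zero] at h
    exact hne ((prefix_of_mem_cyl (wcat_mem_cyl v η) this hlen.le).eq_of_length hlen)
  | succ k ih =>
    obtain ⟨v, ⟨⟨hlen, -⟩, -⟩, η, hη, rfl⟩ := omegaPow_subset_catOmega _ hξ
    rw [mem_preimage, Nat.succ_mul, add_comm, ← shift_shift, ← hlen, shift_wcat, hlen]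
    exact ih hη

section RegularLanguages

variable {α : Type*} {L M : Language α}

theorem isRegular_of_finite (hL : (L : Set (List α)).Finite) : L.IsRegular := by
  refine .of_finite_range_leftQuotient ?_
  have finite_suffixes : (⋃ w ∈ (L : Set (List α)), {y | y ∈ w.tails}).Finite :=
    hL.biUnion fun w _ => w.tails.finite_toSet
  refine finite_suffixes.finite_subsets.subset ?_
  rintro _ ⟨x, rfl⟩ y hy
  exact mem_biUnion hy ((List.mem_tails y _).mpr (List.suffix_append x y))

theorem mem_sSup_iff {S : Set (Language α)} {w : List α} : w ∈ sSup S ↔ ∃ K ∈ S, w ∈ K := Iff.rfl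

theorem leftQuotient_mul (L M : Language α) (x : List α) :
    (L * M).leftQuotient x =
      L.leftQuotient x * M + sSup {K | ∃ a ∈ L, ∃ b, a ++ b = x ∧ M.leftQuotient b = K} := by
  ext y
  rw [Language.mem_leftQuotient, Language.mem_add]
  constructor
  · rintro ⟨a, ha, b, hb, hab⟩
    rcases List.append_eq_append_iff.mp hab with ⟨c, rfl, rfl⟩ | ⟨c, rfl, rfl⟩
    · exact .inr ⟨M.leftQuotient c, ⟨a, ha, c, rfl, rfl⟩, hb⟩
    · exact .inl (Language.append_mem_mul ha hb)
  · rintro (⟨a, ha, b, hb, rfl⟩ | ⟨_, ⟨a, ha, b, rfl, rfl⟩, hy⟩)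
    · rw [← List.append_assoc]
      exact Language.append_mem_mul ha hb
    · rw [List.append_assoc]
      exact Language.append_mem_mul ha hy

theorem isRegular_mul (hL : L.IsRegular) (hM : M.IsRegular) : (L * M).IsRegular := by
  refine .of_finite_range_leftQuotient ?_
  refine (hL.finite_range_leftQuotient.image2 (fun K T => K * M + sSup T)
    hM.finite_range_leftQuotient.finite_subsets).subset ?_
  rintro _ ⟨x, rfl⟩
  refine ⟨_, mem_range_self x, _, ?_, (leftQuotient_mul L M x).symm⟩
  rintro _ ⟨_, -, b, -, rfl⟩
  exact mem_range_self b

theorem kstar_append_mem {v w : List α} (hv : v ∈ L∗) (hw : w ∈ L∗) : v ++ w ∈ L∗ :=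
  kstar_mul_kstar L ▸ Language.append_mem_mul hv hw

theorem leftQuotient_kstar (L : Language α) (x : List α) :
    (L∗).leftQuotient x =
      sSup ({K | K = 1 ∧ x ∈ L∗} ∪ {K | ∃ a ∈ L∗, ∃ b, a ++ b = x ∧ L.leftQuotient b = K}) *
        L∗ := by
  ext y
  rw [Language.mem_leftQuotient]
  constructor
  · rintro ⟨S, hS, hSL⟩
    have flatten_mem {S' : List (List α)} (h : S' ⊆ S) : S'.flatten ∈ L∗ :=
      Language.join_mem_kstar fun v hv => hSL v (h hv)
    rcases List.append_eq_flatten_iff.mp hS with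
      ⟨S₁, S₂, rfl, rfl, rfl⟩ | ⟨S₁, b, c, cs, S₂, rfl, rfl, rfl⟩
    · exact Language.append_mem_mul (a := []) (mem_sSup_iff.mpr
        ⟨1, .inl ⟨rfl, flatten_mem (by simp)⟩, Language.nil_mem_one⟩) (flatten_mem (by simp))
    · have block_mem : b ++ c :: cs ∈ L := hSL _ (by simp)
      refine Language.append_mem_mul (mem_sSup_iff.mpr
        ⟨_, .inr ⟨S₁.flatten, flatten_mem (by simp), b, rfl, rfl⟩, block_mem⟩) (flatten_mem ?_)
      exact fun v hv => by simp [hv]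
  · rintro ⟨c, hc, z, hz, rfl⟩
    obtain ⟨_, ⟨rfl, hx⟩ | ⟨a, ha, b, rfl, rfl⟩, hc⟩ := mem_sSup_iff.mp hc
    · obtain rfl := (Language.mem_one c).mp hc
      exact kstar_append_mem hx hz
    · have := kstar_append_mem ha (kstar_append_mem (le_kstar (a := L) hc) hz)
      simpa only [List.append_assoc] using this

theorem isRegular_kstar (hL : L.IsRegular) : (L∗).IsRegular := by
  refine .of_finite_range_leftQuotient ?_
  refine ((hL.finite_range_leftQuotient.insert 1).finite_subsets.image (sSup · * L∗)).subset ?_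
  rintro _ ⟨x, rfl⟩
  refine ⟨_, ?_, (leftQuotient_kstar L x).symm⟩
  rintro _ (⟨rfl, -⟩ | ⟨_, -, b, -, rfl⟩)
  · exact mem_insert _ _
  · exact mem_insert_of_mem _ (mem_range_self b)

theorem exists_forall_leftQuotient_eq_zero {S : Set (Language α)} (hS : S.Finite)
    (h : ∀ K ∈ S, ∀ u, ∃ p, K.leftQuotient (u ++ p) = 0) :
    ∃ y, ∀ K ∈ S, K.leftQuotient y = 0 := by
  induction S, hS using Set.Finite.induction_on with
  | empty => exact ⟨[], fun K hK => absurd hK (notMem_empty K)⟩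
  | @insert K S _ _ ih =>
    obtain ⟨y, hy⟩ := ih fun K' hK' => h K' (mem_insert_of_mem _ hK')
    obtain ⟨p, hp⟩ := h K (mem_insert _ _) y
    refine ⟨y ++ p, fun K' hK' => ?_⟩
    obtain rfl | hK' := hK'
    · exact hp
    · rw [Language.leftQuotient_append, hy K' hK']
      rfl

theorem exists_forall_leftQuotient_append_eq_zero (hL : L.IsRegular)
    (h : ∀ u, ∃ p, L.leftQuotient (u ++ p) = 0) :
    ∃ y, ∀ x, L.leftQuotient (x ++ y) = 0 := by
  obtain ⟨y, hy⟩ := exists_forall_leftQuotient_eq_zero hL.finite_range_leftQuotient <| by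
    rintro _ ⟨x, rfl⟩ u
    simpa only [Language.leftQuotient_append, List.append_assoc] using h (x ++ u)
  exact ⟨y, fun x => by rw [Language.leftQuotient_append, hy _ (mem_range_self x)]⟩

end RegularLanguages

theorem IsRegLang.isRegular {L : Language X} (hL : IsRegLang L) : L.IsRegular := by
  induction hL with
  | finite W hW => exact isRegular_of_finite hW
  | union W V _ _ hW hV => exact hW.add hV
  | concat W V _ _ hW hV => exact isRegular_mul hW hV
  | star W _ hW => exact isRegular_kstar hW

theorem isRegLang_top [Finite X] : IsRegLang (⊤ : Language X) := by
  let letters : Language X := {v | v.length = 1}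
  have kstar_letters : letters∗ = ⊤ := by
    refine eq_top_iff.mpr fun v _ => ⟨v.map ([·]), (List.flatMap_singleton' v).symm, ?_⟩
    exact List.forall_mem_map.mpr fun a _ => List.length_singleton
  exact kstar_letters ▸ .star _ (.finite _ (List.finite_length_eq X 1))

theorem isRegLang_otherBlocks [Finite X] (w : List X) : IsRegLang (otherBlocks w) :=
  .finite _ ((List.finite_length_eq X w.length).subset fun _ h => h.1)

section Topology

open TopologicalSpace

variable [TopologicalSpace X]

theorem continuous_shift (n : ℕ) : Continuous (shift n : (ℕ → X) → ℕ → X) :=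
  continuous_pi fun i => continuous_apply (n + i)

theorem continuous_wcat (w : List X) : Continuous (wcat w) := by
  refine continuous_pi fun i => ?_
  rcases lt_or_ge i w.length with hi | hi
  · simpa only [wcat_apply_of_lt hi] using continuous_const
  · obtain ⟨j, rfl⟩ := Nat.exists_eq_add_of_le hi
    simpa only [wcat_apply_length_add] using continuous_apply j

theorem isOpenMap_shift (n : ℕ) : IsOpenMap (shift n : (ℕ → X) → ℕ → X) := by
  intro U hU
  have image_eq : shift n '' U = ⋃ w ∈ {w : List X | w.length = n}, wcat w ⁻¹' U := by
    ext ξ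
    rw [mem_iUnion₂]
    constructor
    · rintro ⟨η, hη, rfl⟩
      refine ⟨prefixWord n η, length_prefixWord n η, ?_⟩
      rwa [mem_preimage, wcat_prefixWord_shift]
    · rintro ⟨w, rfl, hw⟩
      exact ⟨wcat w ξ, hw, shift_wcat w ξ⟩
  rw [image_eq]
  exact isOpen_biUnion fun w _ => hU.preimage (continuous_wcat w)

theorem isMeagre_catOmega_top {A : Set (ℕ → X)} (hA : IsMeagre A) : IsMeagre (catOmega ⊤ A) := by
  rw [catOmega_top]
  exact isMeagre_iUnion fun n => hA.preimage_of_isOpenMap (continuous_shift n) (isOpenMap_shift n)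

variable [DiscreteTopology X]

theorem cantorTop_eq : cantorTop X = Pi.topologicalSpace := by
  rw [cantorTop, ‹DiscreteTopology X›.eq_bot]

theorem isOpen_cyl (w : List X) : IsOpen (cyl w) := by
  rcases (cyl w).eq_empty_or_nonempty with h | ⟨ξ, hξ⟩
  · exact h ▸ isOpen_empty
  · rw [← mem_cyl_iff_prefixWord_eq.mp hξ, cyl_prefixWord]
    exact PiNat.isOpen_cylinder _ ξ _

theorem isTopologicalBasis_cyl : IsTopologicalBasis (range (cyl (X := X))) := by
  refine isTopologicalBasis_of_isOpen_of_nhds (forall_mem_range.mpr isOpen_cyl) fun ξ U hξ hU => ?_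
  obtain ⟨_, ⟨η, n, rfl⟩, hξη, hsub⟩ :=
    (PiNat.isTopologicalBasis_cylinders fun _ => X).exists_subset_of_mem_open hξ hU
  refine ⟨_, mem_range_self (prefixWord n ξ), mem_cyl_prefixWord n ξ, ?_⟩
  rwa [cyl_prefixWord, PiNat.mem_cylinder_iff_eq.mp hξη]

theorem isOpenMap_wcat (w : List X) : IsOpenMap (wcat w) := by
  refine isTopologicalBasis_cyl.isOpenMap_iff.mpr (forall_mem_range.mpr fun v => ?_)
  rw [image_wcat_cyl]
  exact isOpen_cyl _

theorem isMeagre_of_forall_exists_disjoint_cyl {A : Set (ℕ → X)}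
    (hA : ∀ p, ∃ q, Disjoint (cyl (p ++ q)) A) : IsMeagre A := by
  choose q hq using hA
  have isOpen_iUnion_cyl : IsOpen (⋃ p, cyl (p ++ q p)) := isOpen_iUnion fun p => isOpen_cyl _
  have dense_iUnion_cyl : Dense (⋃ p, cyl (p ++ q p)) := by
    refine isTopologicalBasis_cyl.dense_iff.mpr (forall_mem_range.mpr ?_)
    rintro p ⟨ξ, -⟩
    have mem_cyl := wcat_mem_cyl (p ++ q p) ξ
    exact ⟨_, cyl_subset_of_prefix (List.prefix_append _ _) mem_cyl, mem_iUnion.mpr ⟨p, mem_cyl⟩⟩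
  refine Filter.mem_of_superset (residual_of_dense_open isOpen_iUnion_cyl dense_iUnion_cyl) ?_
  exact iUnion_subset fun p => (hq p).subset_compl_right

theorem isMeagre_of_countable [Nontrivial X] {F : Set (ℕ → X)} (hF : F.Countable) :
    IsMeagre F := by
  rw [← biUnion_of_singleton F]
  refine isMeagre_biUnion hF fun ξ _ => isMeagre_of_forall_exists_disjoint_cyl fun p => ?_
  obtain ⟨a, ha⟩ := exists_ne (ξ p.length)
  refine ⟨[a], disjoint_singleton_right.mpr fun hξ => ?_⟩
  obtain ⟨η, hη⟩ := (mem_cyl_append.mp hξ).2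
  exact ha (congrFun hη 0).symm

theorem isMeagre_omegaPow_otherBlocks (w : List X) : IsMeagre (omegaPow (otherBlocks w)) := by
  refine isMeagre_of_forall_exists_disjoint_cyl fun p => ?_
  rcases w with _ | ⟨a, w⟩
  · refine ⟨[], ((disjoint_omegaPow_otherBlocks [] 0).mono_right fun ξ _ => ?_).symm⟩
    exact ⟨_, rfl⟩
  -- `p` and `|w|` further copies of `p` end at a multiple of the block length.
  · refine ⟨(List.replicate w.length p).flatten ++ a :: w, ?_⟩
    refine ((disjoint_omegaPow_otherBlocks (a :: w) p.length).mono_right fun ξ hξ => ?_).symm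
    rw [← List.append_assoc, mem_cyl_append] at hξ
    have length_eq : (p ++ (List.replicate w.length p).flatten).length
        = p.length * (a :: w).length := by
      simp only [List.length_append, List.length_flatten, List.map_replicate,
        List.sum_replicate, List.length_cons, smul_eq_mul]
      ring
    exact length_eq ▸ hξ.2

theorem isMeagre_cyl_diff_catOmega [Nonempty X] {V : Language X} {u : List X}
    (hu : ∀ p, (V∗).leftQuotient (u ++ p) ≠ 0) :
    IsMeagre (cyl u \ catOmega (V∗ - 1) (cyl u)) := by
  refine isMeagre_of_forall_exists_disjoint_cyl fun p => ?_
  by_cases h : u <+: p ++ u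
  · obtain ⟨s, hs⟩ := h
    obtain ⟨a⟩ := ‹Nonempty X›
    obtain ⟨q, hq⟩ : ((V∗).leftQuotient (u ++ (s ++ [a])) : Set (List X)).Nonempty :=
      nonempty_iff_ne_empty.mpr (hu _)
    refine ⟨u ++ [a] ++ q ++ u, disjoint_left.mpr ?_⟩
    have regroup : p ++ (u ++ [a] ++ q ++ u) = u ++ (s ++ [a]) ++ q ++ u := by
      simp only [← List.append_assoc, hs]
    rw [regroup, ← image_wcat_cyl]
    rintro _ ⟨η, hη, rfl⟩ hdiff
    have ne_nil : u ++ (s ++ [a]) ++ q ≠ [] := by simp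
    exact hdiff.2 ⟨_, ⟨hq, ne_nil⟩, η, hη, rfl⟩
  · refine ⟨u, disjoint_left.mpr fun ξ hξ hdiff => h ?_⟩
    exact prefix_of_mem_cyl hdiff.1 hξ
      (List.suffix_append p u).length_le

theorem not_isMeagre_omegaPow [Nonempty X] {V : Language X} {u : List X}
    (hu : ∀ p, (V∗).leftQuotient (u ++ p) ≠ 0) : ¬ IsMeagre (omegaPow V) := by
  intro hV
  set A := cyl u \ catOmega (V∗ - 1) (cyl u)
  have returning_subset : cyl u \ catOmega ⊤ A ⊆ omegaPow V := by
    refine subset_omegaPow_of_subset_catOmega_kstar fun ξ hξ => ?_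
    have not_mem : ξ ∉ A := fun h => hξ.2 ⟨[], mem_univ _, ξ, h, rfl⟩
    obtain ⟨g, hg, η, hη, rfl⟩ : ξ ∈ catOmega (V∗ - 1) (cyl u) := by
      by_contra h
      exact not_mem ⟨hξ.1, h⟩
    refine ⟨g, hg, η, ⟨hη, ?_⟩, rfl⟩
    rintro ⟨v, -, ζ, hζ, rfl⟩
    exact hξ.2 ⟨g ++ v, mem_univ _, ζ, hζ, (wcat_append g v ζ).symm⟩
  have isMeagre_cyl : IsMeagre (cyl u) :=
    (hV.union (isMeagre_catOmega_top (isMeagre_cyl_diff_catOmega hu))).mono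
      (sdiff_subset_iff.mp returning_subset |>.trans (union_comm _ _).subset)
  exact not_isMeagre_of_isOpen (isOpen_cyl u)
    ⟨wcat u fun _ => Classical.arbitrary X, wcat_mem_cyl _ _⟩ isMeagre_cyl

theorem exists_omegaPow_subset_compl_infixOcc {V : Language X} (hV : (V∗).IsRegular)
    (hm : IsMeagre (omegaPow V)) : ∃ y, omegaPow V ⊆ (infixOcc y)ᶜ := by
  rcases isEmpty_or_nonempty X with _ | _
  · exact ⟨[], fun ξ => isEmptyElim (ξ 0)⟩
  have exists_dead (u : List X) : ∃ p, (V∗).leftQuotient (u ++ p) = 0 := by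
    by_contra! hu
    exact not_isMeagre_omegaPow hu hm
  obtain ⟨y, hy⟩ := exists_forall_leftQuotient_append_eq_zero hV exists_dead
  refine ⟨y, fun ξ hξ => ?_⟩
  rintro ⟨x, hx⟩
  obtain ⟨v, hv, hle, hξv⟩ := exists_mem_kstar_mem_cyl_of_mem_omegaPow hξ (x ++ y).length
  obtain ⟨q, rfl⟩ := prefix_of_mem_cyl hx hξv hle
  have hq : q ∈ (V∗).leftQuotient (x ++ y) := hv
  rw [hy x] at hq
  exact Language.notMem_zero q hq

theorem exists_catOmega_subset_eventuallyAvoiding {W V : Language X} (hV : (V∗).IsRegular)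
    (hm : IsMeagre (catOmega W (omegaPow V))) :
    ∃ w, catOmega W (omegaPow V) ⊆ eventuallyAvoiding w := by
  by_cases hW : ∃ w, w ∈ W
  · obtain ⟨w, hw⟩ := hW
    have subset_preimage : omegaPow V ⊆ wcat w ⁻¹' catOmega W (omegaPow V) :=
      fun η hη => ⟨w, hw, η, hη, rfl⟩
    have isMeagre_omegaPow : IsMeagre (omegaPow V) :=
      (hm.preimage_of_isOpenMap (continuous_wcat w) (isOpenMap_wcat w)).mono subset_preimage
    obtain ⟨y, hy⟩ := exists_omegaPow_subset_compl_infixOcc hV isMeagre_omegaPow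
    exact ⟨y, catOmega_mono le_top hy⟩
  · refine ⟨[], fun ξ hξ => ?_⟩
    obtain ⟨w, hw, -⟩ := hξ
    exact (not_exists.mp hW w hw).elim

theorem IsRegOmega.exists_subset_eventuallyAvoiding {A : Set (ℕ → X)} (hA : IsRegOmega A)
    (hm : IsMeagre A) : ∃ w, A ⊆ eventuallyAvoiding w := by
  obtain ⟨n, W, V, hreg, rfl⟩ := hA
  have exists_word (i : Fin n) :=
    exists_catOmega_subset_eventuallyAvoiding (isRegular_kstar (hreg i).2.isRegular)
      (hm.mono (subset_iUnion (fun i => catOmega (W i) (omegaPow (V i))) i))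
  choose w hw using exists_word
  obtain ⟨v, hv⟩ := directed_eventuallyAvoiding.finite_le w
  exact ⟨v, iUnion_subset fun i => (hw i).trans (hv i)⟩

end Topology

theorem stmt13_general [Finite X] [TopologicalSpace X] [DiscreteTopology X] {F : Set (ℕ → X)}
    (hF : IsMeagre F) : HasABP F ↔ ∃ w, F ⊆ eventuallyAvoiding w := by
  rw [HasABP, cantorTop_eq]
  constructor
  · rintro ⟨E, F', -, hE, hF', hm, hsub⟩
    have isMeagre_E : IsMeagre E :=
      (hF.union hm).mono (sdiff_subset_iff.mp (subset_union_right.trans hsub))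
    obtain rfl : E = ∅ := by
      by_contra hne
      exact not_isMeagre_of_isOpen hE (nonempty_iff_ne_empty.mpr hne) isMeagre_E
    obtain ⟨w, hw⟩ := hF'.exists_subset_eventuallyAvoiding hm
    exact ⟨w, ((symmDiff_bot F).ge.trans hsub).trans hw⟩
  · rintro ⟨w, hw⟩
    refine ⟨∅, catOmega ⊤ (omegaPow (otherBlocks w)), ?_, isOpen_empty, ?_,
      isMeagre_catOmega_top (isMeagre_omegaPow_otherBlocks w), ?_⟩
    · exact ⟨0, Fin.elim0, Fin.elim0, fun i => i.elim0, (iUnion_of_empty _).symm⟩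
    · exact ⟨1, fun _ => ⊤, fun _ => otherBlocks w,
        fun _ => ⟨isRegLang_top, isRegLang_otherBlocks w⟩, (iUnion_const _).symm⟩
    · exact (symmDiff_bot F).le.trans (hw.trans (eventuallyAvoiding_subset_catOmega w))

theorem stmt13 {X : Type} [Fintype X] (hX : 2 ≤ Fintype.card X)
    (F : Set (ℕ → X)) (hfin : F.Finite) :
    HasABP F ↔ ∀ ξ ∈ F, ¬ Disjunctive ξ := by
  have : Nontrivial X := Fintype.one_lt_card_iff_nontrivial.mp hX
  let : TopologicalSpace X := ⊥
  have : DiscreteTopology X := ⟨rfl⟩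
  exact (stmt13_general (isMeagre_of_countable hfin.countable)).trans
    (exists_subset_eventuallyAvoiding_iff hfin)

end AutoBaire
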